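/- Let F be a free group and p ∈ F primitive. If β ∈ F satisfies p^{r'} = β * p^{r''} * β⁻¹ with r'' ≠ 0, then r' = r'' and β ∈ ⟨p⟩. -/

import Mathlib

open scoped Pointwise

/-- An element `p` of a free group is primitive if it is nontrivial and its only
roots are `p` itself and `p⁻¹`. -/
def IsPrimitiveElt {A : Type*} (p : FreeGroup A) : Prop :=
  p ≠ 1 ∧ ∀ (w : FreeGroup A) (l : ℤ), w ^ l = p → w = p ∨ w = p⁻¹

/-- The coset `v·⟨p⟩ = {v * p^k : k ∈ ℤ}`. -/
def coset {A : Type*} (v p : FreeGroup A) : Set (FreeGroup A) :=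
  {x | ∃ k : ℤ, x = v * p ^ k}

/-- A free group element is cyclically reduced if its reduced word does not begin
and end with mutually inverse letters. -/
def CyclicallyReduced {A : Type*} [DecidableEq A] (w : FreeGroup A) : Prop :=
  ∀ x y : A × Bool, w.toWord.head? = some x → w.toWord.getLast? = some y →
    ¬(x.1 = y.1 ∧ x.2 = !y.2)

/-!
`IsMulTorsionFree` demands unique roots, not just the absence of torsion, so an element commuting
with `b^n`, `n ≠ 0`, commutes with `b`. Hence, if the centralizer of `p ≠ 1` is `⟨p⟩`, a relation
`β p^m β⁻¹ = p^n` with `m ≠ 0` forces `β p β⁻¹` and `β⁻¹ p β` to lie in `⟨p⟩`: `β` normalizes `⟨p⟩`,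
so that `β p β⁻¹ = p^{±1}`. The sign `-1` is impossible, since then `β²`, and therefore `β`, would
commute with `p`. Thus `β` centralizes `p`.

A primitive element `p` of a free group has centralizer `⟨p⟩`: two commuting elements generate an
abelian subgroup, which is free by Nielsen–Schreier and therefore cyclic.
-/

section TorsionFree

variable {G : Type*} [Group G] [IsMulTorsionFree G] {a b p β : G} {m n : ℤ}

theorem commute_zpow_right_iff (hn : n ≠ 0) : Commute a (b ^ n) ↔ Commute a b := by
  rw [commute_iff_eq, commute_iff_eq, ← mul_inv_eq_iff_eq_mul, ← mul_inv_eq_iff_eq_mul,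
    ← conj_zpow, zpow_left_inj hn]

theorem eq_one_of_semiconjBy_inv (h : SemiconjBy b a a⁻¹) : a = 1 := by
  have h_sq : Commute (b ^ (2 : ℤ)) a := by
    rw [zpow_two]
    exact SemiconjBy.mul_left (by simpa only [inv_inv] using h.inv_right) h
  have h_comm : Commute a b := (commute_zpow_right_iff two_ne_zero).1 h_sq.symm
  exact self_eq_inv.1 (mul_right_cancel (h_comm.eq.trans h.eq))

theorem normalizer_zpowers_le_centralizer (a : G) :
    Subgroup.normalizer (Subgroup.zpowers a : Set G) ≤ Subgroup.centralizer {a} := by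
  intro b hb
  rw [Subgroup.mem_centralizer_singleton_iff]
  obtain rfl | ha := eq_or_ne a 1
  · rw [mul_one, one_mul]
  have h_zpowers : Subgroup.zpowers a = Subgroup.zpowers (b * a * b⁻¹) := by
    rw [Subgroup.mem_normalizer_iff_map_conj_eq, MonoidHom.map_zpowers] at hb
    exact hb.symm
  rcases (Subgroup.zpowers_eq_zpowers_iff (not_isOfFinOrder_of_isMulTorsionFree ha)).1 h_zpowers
    with h_eq | h_inv
  · exact (eq_mul_inv_iff_mul_eq.1 h_eq).symm
  · exact absurd (eq_one_of_semiconjBy_inv (eq_mul_inv_iff_mul_eq.1 h_inv).symm) ha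

theorem conj_mem_zpowers_of_conj_zpow_eq_zpow
    (hp : Subgroup.centralizer {p} ≤ Subgroup.zpowers p) (hn : n ≠ 0)
    (h : β * p ^ m * β⁻¹ = p ^ n) : β * p * β⁻¹ ∈ Subgroup.zpowers p := by
  apply hp
  rw [Subgroup.mem_centralizer_singleton_iff, ← commute_iff_eq, ← commute_zpow_right_iff hn, ← h,
    ← conj_zpow]
  exact Commute.self_zpow _ _

theorem mem_normalizer_zpowers_of_conj_zpow_eq_zpow
    (hp : Subgroup.centralizer {p} ≤ Subgroup.zpowers p) (hm : m ≠ 0) (hn : n ≠ 0)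
    (h : β * p ^ m * β⁻¹ = p ^ n) : β ∈ Subgroup.normalizer (Subgroup.zpowers p : Set G) := by
  have h_symm : β⁻¹ * p ^ n * β⁻¹⁻¹ = p ^ m := by rw [← h]; group
  rw [Subgroup.mem_normalizer_iff_map_conj_eq]
  apply le_antisymm
  · rw [MonoidHom.map_zpowers, Subgroup.zpowers_le]
    exact conj_mem_zpowers_of_conj_zpow_eq_zpow hp hn h
  · rw [Subgroup.zpowers_le]
    exact ⟨_, conj_mem_zpowers_of_conj_zpow_eq_zpow hp hm h_symm, by simp [mul_assoc]⟩

end TorsionFree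

theorem commute_freeGroup_of_iff {X : Type*} {x y : X} :
    Commute (FreeGroup.of x) (FreeGroup.of y) ↔ x = y := by
  classical
  refine ⟨fun h => ?_, fun h => h ▸ Commute.refl _⟩
  have h_word := congrArg FreeGroup.toWord h.eq
  have h_letters : x = y ∧ y = x := by simpa [FreeGroup.toWord_mul] using h_word
  exact h_letters.1

theorem isCyclic_of_isFreeGroup_of_isMulCommutative (G : Type*) [Group G] [IsFreeGroup G]
    [hG : IsMulCommutative G] : IsCyclic G := by
  let e := IsFreeGroup.toFreeGroup G
  have : IsMulCommutative (FreeGroup (IsFreeGroup.Generators G)) :=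
    Function.Surjective.mul_comm (f := (e : G →ₙ* _)) e.surjective hG
  have : Subsingleton (IsFreeGroup.Generators G) :=
    ⟨fun _ _ => commute_freeGroup_of_iff.1 (mul_comm' _ _)⟩
  rw [e.isCyclic]
  rcases isEmpty_or_nonempty (IsFreeGroup.Generators G) with _ | ⟨⟨x⟩⟩
  · infer_instance
  · have := uniqueOfSubsingleton x
    infer_instance

theorem exists_mem_zpowers_of_commute {G : Type*} [Group G] [IsFreeGroup G] {a b : G}
    (h : Commute a b) : ∃ w : G, a ∈ Subgroup.zpowers w ∧ b ∈ Subgroup.zpowers w := by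
  have : IsMulCommutative (Subgroup.closure {a, b}) :=
    Subgroup.isMulCommutative_closure (by
      rintro x (rfl | rfl) y (rfl | rfl)
      exacts [rfl, h.eq, h.eq.symm, rfl])
  obtain ⟨w, hw⟩ := (Subgroup.isCyclic_iff_exists_zpowers_eq_top _).1
    (isCyclic_of_isFreeGroup_of_isMulCommutative (Subgroup.closure {a, b}))
  have h_subset : {a, b} ⊆ (Subgroup.zpowers w : Set G) := hw ▸ Subgroup.subset_closure
  exact ⟨w, h_subset (by simp), h_subset (by simp)⟩

theorem IsPrimitiveElt.centralizer_le_zpowers {A : Type*} {p : FreeGroup A}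
    (hp : IsPrimitiveElt p) : Subgroup.centralizer {p} ≤ Subgroup.zpowers p := by
  intro b hb
  obtain ⟨w, hbw, k, hk⟩ :=
    exists_mem_zpowers_of_commute (Subgroup.mem_centralizer_singleton_iff.1 hb)
  rcases hp.2 w k hk with rfl | rfl
  · exact hbw
  · rwa [Subgroup.zpowers_inv] at hbw

theorem stmt6_general {G : Type*} [Group G] [IsMulTorsionFree G] {p β : G} (hp_ne : p ≠ 1)
    (hp : Subgroup.centralizer {p} ≤ Subgroup.zpowers p) {n m : ℤ} (hm : m ≠ 0)
    (h : p ^ n = β * p ^ m * β⁻¹) : n = m ∧ β ∈ Subgroup.zpowers p := by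
  have hn : n ≠ 0 := by
    rintro rfl
    rw [zpow_zero, eq_comm, conj_eq_one_iff, IsMulTorsionFree.zpow_eq_one_iff_left hm] at h
    exact hp_ne h
  have hβ : β ∈ Subgroup.centralizer {p} :=
    normalizer_zpowers_le_centralizer p
      (mem_normalizer_zpowers_of_conj_zpow_eq_zpow hp hm hn h.symm)
  have h_comm : Commute β p := Subgroup.mem_centralizer_singleton_iff.1 hβ
  have h_pow : p ^ n = p ^ m := by rw [h, (h_comm.zpow_right m).eq, mul_inv_cancel_right]
  exact ⟨injective_zpow_iff_not_isOfFinOrder.2 (not_isOfFinOrder_of_isMulTorsionFree hp_ne) h_pow,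
    hp hβ⟩

theorem stmt6 {A : Type*} (p β : FreeGroup A) (hp : IsPrimitiveElt p)
    (r' r'' : ℤ) (hr : r'' ≠ 0) (h : p ^ r' = β * p ^ r'' * β⁻¹) :
    r' = r'' ∧ β ∈ Subgroup.zpowers p :=
  stmt6_general hp.1 hp.centralizer_le_zpowers hr h
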